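/- arXiv:2002.10704 — 2 statements merged into one kernel-verified Lean document; each statement's English description precedes it below -/
import Mathlib

section
/- For every n ≥ 2 there exist MRF (submodular dichotomous) valuations f_1,…,f_n on a finite item set M (one can take |M| = (2n−1)n) such that a Lorenz dominating allocation exists, yet in every Lorenz dominating allocation some agent receives a bundle whose value is strictly less than her maximin share; in particular no Lorenz dominating allocation is maximin fair. -/
open Finset
open scoped Classical

variable {n : ℕ} {I : Type*} [DecidableEq I] [Fintype I]

/-- An allocation assigns pairwise disjoint bundles of items to the agents
(items may remain unallocated). -/
def IsAllocation (A : Fin n → Finset I) : Prop :=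
  ∀ i j : Fin n, i ≠ j → Disjoint (A i) (A j)

/-- The vector of utilities of an allocation under a profile of valuations. -/
def util {α : Type*} (f : Fin n → Finset I → α) (A : Fin n → Finset I) : Fin n → α :=
  fun i => f i (A i)

/-- The entries of the vector `u`, sorted in nondecreasing order. -/
noncomputable def sortedVec {α : Type*} [LinearOrder α] (u : Fin n → α) : List α :=
  (Finset.univ.val.map u).sort (· ≤ ·)

/-- `u` Lorenz-dominates `v`: for each `k`, the sum of the `k` smallest entries of `u`
is at least the sum of the `k` smallest entries of `v`. -/
def LorenzGE {α : Type*} [LinearOrder α] [AddCommMonoid α] (u v : Fin n → α) : Prop :=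
  ∀ k : ℕ, ((sortedVec v).take k).sum ≤ ((sortedVec u).take k).sum

/-- A matroid rank function: a normalized submodular valuation with dichotomous marginals. -/
structure IsMRF (f : Finset I → ℕ) : Prop where
  empty : f ∅ = 0
  submod : ∀ S T : Finset I, S ⊆ T → ∀ a : I,
      f (insert a T) + f S ≤ f (insert a S) + f T
  dichot : ∀ (S : Finset I) (a : I), f (insert a S) = f S ∨ f (insert a S) = f S + 1

/-- Non-redundancy: removing any item from any agent's bundle strictly decreases its value. -/
def NonRedundant (f : Fin n → Finset I → ℕ) (A : Fin n → Finset I) : Prop :=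
  ∀ i : Fin n, ∀ a ∈ A i, f i ((A i).erase a) < f i (A i)

/-- A Lorenz dominating allocation. -/
def LorenzDominating (f : Fin n → Finset I → ℕ) (A : Fin n → Finset I) : Prop :=
  ∀ B : Fin n → Finset I, IsAllocation B → LorenzGE (util f A) (util f B)

/-- The σ-perturbed utilities: agent `i` gets `f i (A i) + σ(i)/n²`, where the priority
`σ(i)` ranges over `{1,…,n}`. -/
noncomputable def pUtil (σ : Equiv.Perm (Fin n)) (f : Fin n → Finset I → ℕ)
    (A : Fin n → Finset I) : Fin n → ℝ :=
  fun i => (f i (A i) : ℝ) + (((σ i : ℕ) : ℝ) + 1) / (n : ℝ) ^ 2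

/-- A σ-Lorenz dominating allocation. -/
def SigmaLorenzDom (σ : Equiv.Perm (Fin n)) (f : Fin n → Finset I → ℕ)
    (A : Fin n → Finset I) : Prop :=
  ∀ B : Fin n → Finset I, IsAllocation B → LorenzGE (pUtil σ f A) (pUtil σ f B)

/-- Restriction of a valuation to a subset `D` of the items. -/
def restrictVal (f : Finset I → ℕ) (D : Finset I) : Finset I → ℕ := fun S => f (S ∩ D)

/-- A partition of all the items into `n` (possibly empty) bundles. -/
def IsPartition (P : Fin n → Finset I) : Prop :=
  (∀ i j : Fin n, i ≠ j → Disjoint (P i) (P j)) ∧ ∀ a : I, ∃ j, a ∈ P j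

/-- An XOS valuation: the pointwise maximum of a finite nonempty family of
nonnegative additive valuations. -/
def IsXOS (f : Finset I → ℝ) : Prop :=
  ∃ (k : ℕ) (w : Fin (k + 1) → I → ℝ),
    (∀ t a, 0 ≤ w t a) ∧
    ∀ S : Finset I, f S = Finset.univ.sup' Finset.univ_nonempty (fun t => ∑ a ∈ S, w t a)

/-- A dichotomous valuation (real-valued version). -/
def IsDichotomousR (f : Finset I → ℝ) : Prop :=
  ∀ (S : Finset I) (a : I), f (insert a S) = f S ∨ f (insert a S) = f S + 1

/-- Envy-freeness up to one good. -/
def EF1 (f : Fin n → Finset I → ℝ) (A : Fin n → Finset I) : Prop :=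
  ∀ i j : Fin n, f i (A j) ≤ f i (A i) ∨ ∃ e ∈ A j, f i ((A j).erase e) ≤ f i (A i)

/-- The maximum welfare attainable by a set `S` of agents. -/
noncomputable def maxWelfare (f : Fin n → Finset I → ℕ) (S : Finset (Fin n)) : ℕ :=
  Finset.sup (Finset.univ.filter fun B : Fin n → Finset I => IsAllocation B)
    (fun B => ∑ j ∈ S, f j (B j))

/-- An allocation extended with index `none` for the set of unallocated items. -/
def extAlloc (A : Fin n → Finset I) : Option (Fin n) → Finset I
  | none => Finset.univ \ Finset.univ.biUnion A
  | some i => A i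

/-- In a sorted list, the initial segment of a given length has the least sum among the
sublists of that length. -/
lemma sum_take_le_of_sublist {l' l : List ℕ} (h : l'.Sublist l) (hl : l.Pairwise (· ≤ ·)) :
    (l.take l'.length).sum ≤ l'.sum := by
  induction l generalizing l' with
  | nil => simp
  | cons a l ih =>
    rw [List.pairwise_cons] at hl
    rcases l' with _ | ⟨b, t⟩
    · simp
    · have hb : a ≤ b := by
        rcases List.mem_cons.1 (h.subset List.mem_cons_self) with rfl | hb
        · exact le_rfl
        · exact hl.1 b hb
      have ht : t.Sublist l := by simpa using h.tail
      simpa using Nat.add_le_add hb (ih ht hl.2)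

lemma length_sortedVec {n : ℕ} (u : Fin n → ℕ) : (sortedVec u).length = n := by
  simp [sortedVec]

lemma sum_sortedVec {n : ℕ} (u : Fin n → ℕ) : (sortedVec u).sum = ∑ i, u i := by
  rw [← Multiset.sum_coe, sortedVec, Multiset.sort_eq]
  rfl

lemma mem_sortedVec {n : ℕ} {u : Fin n → ℕ} {x : ℕ} : x ∈ sortedVec u ↔ ∃ i, u i = x := by
  simp [sortedVec]

/-- The sum of the `#T` smallest entries is at most the sum of the entries indexed by `T`. -/
lemma sum_take_sortedVec_le {n : ℕ} (u : Fin n → ℕ) (T : Finset (Fin n)) :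
    ((sortedVec u).take #T).sum ≤ ∑ i ∈ T, u i := by
  have hle : T.val.map u ≤ (↑(sortedVec u) : Multiset ℕ) := by
    rw [sortedVec, Multiset.sort_eq]
    exact Multiset.map_le_map (Finset.val_le_iff.2 (Finset.subset_univ T))
  obtain ⟨l', hl', hsub⟩ : ∃ l' : List ℕ, (↑l' : Multiset ℕ) = T.val.map u ∧
      l'.Sublist (sortedVec u) := by
    induction h : T.val.map u using Quotient.inductionOn with
    | h l =>
      rw [h] at hle
      obtain ⟨l', hp, hs⟩ := Multiset.coe_le.1 hle
      exact ⟨l', Multiset.coe_eq_coe.2 hp, hs⟩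
  have hlen : l'.length = #T := by
    rw [← Multiset.coe_card, hl', Multiset.card_map, Finset.card_val]
  have hsum : l'.sum = ∑ i ∈ T, u i := by
    rw [← Multiset.sum_coe, hl']
    rfl
  rw [← hlen, ← hsum]
  exact sum_take_le_of_sublist hsub (Multiset.pairwise_sort _ _)

/-- Natural numbers with sum at most one more than their count have, for each smaller size `k`,
a subfamily of size `k` and sum at most `k`. -/
lemma exists_subset_card_sum_le {ι : Type*} [DecidableEq ι] (v : ι → ℕ) (S : Finset ι) (k : ℕ)
    (hS : ∑ i ∈ S, v i ≤ #S + 1) (hk : k < #S) :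
    ∃ T ⊆ S, #T = k ∧ ∑ i ∈ T, v i ≤ k := by
  induction h : #S generalizing S with
  | zero => omega
  | succ m ih =>
    obtain ⟨x, hx, hmax⟩ := Finset.exists_max_image S v (Finset.card_pos.1 (by omega))
    have hcard := Finset.card_erase_of_mem hx
    have hsum := Finset.add_sum_erase S v hx
    have hle : ∑ i ∈ S.erase x, v i ≤ m := by
      by_cases h1 : v x ≤ 1
      · have := Finset.sum_le_card_nsmul (S.erase x) v 1
          (fun i hi => (hmax i (Finset.mem_of_mem_erase hi)).trans h1)
        refine this.trans ?_
        simp only [smul_eq_mul, mul_one]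
        omega
      · omega
    rcases (show k = m ∨ k < m by omega) with rfl | hkm
    · exact ⟨S.erase x, Finset.erase_subset _ _, by omega, hle⟩
    · obtain ⟨T, hT, h1, h2⟩ := ih (S.erase x) (by omega) (by omega) (by omega)
      exact ⟨T, hT.trans (Finset.erase_subset _ _), h1, h2⟩

/-- The rank function of the partition matroid with blocks `p`, `¬ p` and capacities `c`, `d`. -/
def twoBlockRank {I : Type*} (p : I → Prop) [DecidablePred p] (c d : ℕ) (S : Finset I) : ℕ :=
  min c #{x ∈ S | p x} + min d #{x ∈ S | ¬ p x}

lemma isMRF_twoBlockRank {I : Type*} [DecidableEq I] (p : I → Prop) [DecidablePred p] (c d : ℕ) :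
    IsMRF (twoBlockRank p c d) := by
  have key : ∀ (q : I → Prop) [DecidablePred q] (S : Finset I) (a : I),
      #{x ∈ insert a S | q x} = #{x ∈ S | q x} + if q a ∧ a ∉ S then 1 else 0 := by
    intro q _ S a
    rw [Finset.filter_insert]
    split_ifs <;> simp_all
  have mono : ∀ (q : I → Prop) [DecidablePred q] {S T : Finset I}, S ⊆ T →
      #{x ∈ S | q x} ≤ #{x ∈ T | q x} :=
    fun q _ S T h => Finset.card_le_card (Finset.filter_subset_filter q h)
  refine ⟨by simp [twoBlockRank], fun S T h a => ?_, fun S a => ?_⟩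
  · have h1 := mono p h
    have h2 := mono (fun x => ¬ p x) h
    simp only [twoBlockRank, key]
    by_cases hp : p a <;> by_cases hS : a ∈ S <;> by_cases hT : a ∈ T <;>
      first
      | exact absurd (h hS) hT
      | (simp only [hp, hS, hT, not_true_eq_false, not_false_eq_true, and_true, and_false,
          if_true, if_false]; omega)
  · simp only [twoBlockRank, key]
    by_cases hp : p a <;> by_cases hS : a ∈ S <;> simp [hp, hS] <;> omega

/-- Only the first `m + 2` of the `N` items are contested: agent `0` uses at most one contested
item and at most two others, the remaining agents count their contested items. -/
def contestedVal (m N : ℕ) (i : Fin (m + 2)) : Finset (Fin N) → ℕ :=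
  if i = 0 then twoBlockRank (fun x => x.val < m + 2) 1 2
  else twoBlockRank (fun x => x.val < m + 2) (m + 2) 0

lemma contestedVal_zero (m N : ℕ) (S : Finset (Fin N)) :
    contestedVal m N 0 S = twoBlockRank (fun x => x.val < m + 2) 1 2 S := by
  simp [contestedVal]

lemma contestedVal_le {m N : ℕ} {i : Fin (m + 2)} (hi : i ≠ 0) (S : Finset (Fin N)) :
    contestedVal m N i S ≤ #{x ∈ S | x.val < m + 2} := by
  simp [contestedVal, hi, twoBlockRank]

lemma sum_card_contested_le {m N : ℕ} {B : Fin (m + 2) → Finset (Fin N)}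
    (hB : IsAllocation B) : ∑ i, #{x ∈ B i | x.val < m + 2} ≤ m + 2 := by
  rw [← Finset.card_biUnion]
  · calc _ ≤ #(Finset.range (m + 2)) :=
          Finset.card_le_card_of_injOn Fin.val (fun x hx => by simp at hx ⊢; omega)
            Fin.val_injective.injOn
      _ = m + 2 := Finset.card_range _
  · exact fun i _ j _ hij => Finset.disjoint_filter_filter (hB i j hij)

/-- The contested items not taken by agent `0` bound the total value of the other agents. -/
lemma sum_contestedVal_add_le {m N : ℕ} {B : Fin (m + 2) → Finset (Fin N)}
    (hB : IsAllocation B) :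
    #{x ∈ B 0 | x.val < m + 2} + ∑ i ∈ Finset.univ.erase 0, contestedVal m N i (B i) ≤ m + 2 := by
  refine le_trans ?_ (sum_card_contested_le hB)
  rw [← Finset.add_sum_erase _ _ (Finset.mem_univ (0 : Fin (m + 2)))]
  exact Nat.add_le_add_left
    (Finset.sum_le_sum fun i hi => contestedVal_le (Finset.ne_of_mem_erase hi) _) _

lemma sum_util_contestedVal_le {m N : ℕ} {B : Fin (m + 2) → Finset (Fin N)}
    (hB : IsAllocation B) : ∑ i, util (contestedVal m N) B i ≤ m + 4 := by
  have h := sum_contestedVal_add_le hB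
  have h0 : contestedVal m N 0 (B 0) ≤ #{x ∈ B 0 | x.val < m + 2} + 2 := by
    rw [contestedVal_zero, twoBlockRank]
    omega
  rw [← Finset.add_sum_erase _ _ (Finset.mem_univ (0 : Fin (m + 2)))]
  simp only [util]
  omega

/-- If agent `0` has value above two, she holds a contested item, which the others then miss. -/
lemma sum_erase_lt_of_two_lt {m N : ℕ} {B : Fin (m + 2) → Finset (Fin N)}
    (hB : IsAllocation B) (h : 2 < contestedVal m N 0 (B 0)) :
    ∑ i ∈ Finset.univ.erase 0, util (contestedVal m N) B i < m + 2 := by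
  have h1 := sum_contestedVal_add_le hB
  rw [contestedVal_zero, twoBlockRank] at h
  simp only [util]
  omega

/-- The allocation giving the uncontested items to agent `0`, two contested items to agent `1`
and one to each other agent. -/
def balancedAlloc (m N : ℕ) (i : Fin (m + 2)) : Finset (Fin N) :=
  if i = 0 then Finset.univ.filter fun x => m + 2 ≤ x.val
  else if i = 1 then Finset.univ.filter fun x => x.val ≤ 1
  else Finset.univ.filter fun x => x.val = i.val

lemma isAllocation_balancedAlloc (m N : ℕ) : IsAllocation (balancedAlloc m N) := by
  intro i j hij
  rw [Finset.disjoint_left]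
  intro x hi hj
  have hi' := i.isLt
  have hj' := j.isLt
  unfold balancedAlloc at hi hj
  simp only [Fin.ext_iff, Fin.val_zero, Fin.val_one, ne_eq] at hi hj hij
  split_ifs at hi hj <;>
    simp only [Finset.mem_filter, Finset.mem_univ, true_and] at hi hj <;> omega

lemma util_balancedAlloc {m N : ℕ} (hN : 3 * (m + 2) ≤ N) (i : Fin (m + 2)) :
    util (contestedVal m N) (balancedAlloc m N) i = if i.val ≤ 1 then 2 else 1 := by
  have hi' := i.isLt
  unfold util
  by_cases h0 : i = 0
  · subst h0
    have hcard : 2 ≤ #{x : Fin N | m + 2 ≤ x.val} := by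
      refine Finset.one_lt_card.2 ⟨⟨m + 2, by omega⟩, ?_, ⟨m + 3, by omega⟩, ?_, ?_⟩ <;> simp
    have hnone : #{x : Fin N | m + 2 ≤ x.val ∧ x.val < m + 2} = 0 := by
      rw [Finset.card_eq_zero, Finset.filter_eq_empty_iff]
      intro x _
      omega
    simp only [contestedVal_zero, twoBlockRank, balancedAlloc, if_true, Finset.filter_filter,
      not_lt, hnone]
    simpa using hcard
  · by_cases h1 : i = 1
    · subst h1
      have : ({x : Fin N | x.val ≤ 1 ∧ x.val < m + 2} : Finset (Fin N)) =
          {⟨0, by omega⟩, ⟨1, by omega⟩} := by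
        ext x
        simp [Fin.ext_iff]
        omega
      simp [contestedVal, twoBlockRank, balancedAlloc, Finset.filter_filter, this]
    · have : ({x : Fin N | x.val = i.val ∧ x.val < m + 2} : Finset (Fin N)) =
          {⟨i, by omega⟩} := by
        ext x
        simp [Fin.ext_iff]
        omega
      have hi2 : ¬ i.val ≤ 1 := by
        simp only [Fin.ext_iff, Fin.val_zero, Fin.val_one] at h0 h1
        omega
      simp [contestedVal, twoBlockRank, balancedAlloc, Finset.filter_filter, this, h0, h1, hi2]

lemma sum_util_balancedAlloc {m N : ℕ} (hN : 3 * (m + 2) ≤ N) :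
    ∑ i, util (contestedVal m N) (balancedAlloc m N) i = m + 4 := by
  simp only [util_balancedAlloc hN, Fin.sum_univ_succ]
  simp
  omega

/-- All but the largest entry of the balanced utility vector sum to at least `m + 2`. -/
lemma le_sum_take_balancedAlloc {m N : ℕ} (hN : 3 * (m + 2) ≤ N) :
    m + 2 ≤ ((sortedVec (util (contestedVal m N) (balancedAlloc m N))).take (m + 1)).sum := by
  set l := sortedVec (util (contestedVal m N) (balancedAlloc m N)) with hl
  have hsum : l.sum = m + 4 := by rw [hl, sum_sortedVec, sum_util_balancedAlloc hN]
  have hdrop : (l.drop (m + 1)).sum ≤ 2 := by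
    have := List.sum_le_card_nsmul (l.drop (m + 1)) 2 (fun x hx => by
      obtain ⟨i, rfl⟩ := mem_sortedVec.1 (List.mem_of_mem_drop hx)
      rw [util_balancedAlloc hN]
      split_ifs <;> omega)
    simpa [hl, length_sortedVec] using this
  have := List.sum_take_add_sum_drop l (m + 1)
  omega

lemma lorenzDominating_balancedAlloc {m N : ℕ} (hN : 3 * (m + 2) ≤ N) :
    LorenzDominating (contestedVal m N) (balancedAlloc m N) := by
  intro B hB k
  set v := util (contestedVal m N) B with hv
  set u := util (contestedVal m N) (balancedAlloc m N) with hu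
  have hothers : ∑ i ∈ Finset.univ.erase 0, v i ≤ m + 2 :=
    le_trans (Nat.le_add_left _ _) (sum_contestedVal_add_le hB)
  have hcard : #(Finset.univ.erase (0 : Fin (m + 2))) = m + 1 := by simp
  rcases lt_trichotomy k (m + 1) with hk | rfl | hk
  · obtain ⟨T, -, rfl, hT⟩ := exists_subset_card_sum_le v (Finset.univ.erase 0) k
      (by omega) (by omega)
    refine (sum_take_sortedVec_le v T).trans (hT.trans ?_)
    have := List.card_nsmul_le_sum ((sortedVec u).take #T) 1 (fun x hx => by
      obtain ⟨i, rfl⟩ := mem_sortedVec.1 (List.mem_of_mem_take hx)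
      rw [hu, util_balancedAlloc hN]
      split_ifs <;> omega)
    simp only [List.length_take, length_sortedVec, smul_eq_mul, mul_one] at this
    omega
  · have := sum_take_sortedVec_le v (Finset.univ.erase 0)
    rw [hcard] at this
    exact this.trans (hothers.trans (le_sum_take_balancedAlloc hN))
  · rw [List.take_of_length_le (by rw [length_sortedVec]; omega),
      List.take_of_length_le (by rw [length_sortedVec]; omega), sum_sortedVec, sum_sortedVec,
      hu, sum_util_balancedAlloc hN]
    exact sum_util_contestedVal_le hB

/-- In every Lorenz dominating allocation, agent `0` gets value at most two. -/
lemma LorenzDominating.contestedVal_zero_le {m N : ℕ} (hN : 3 * (m + 2) ≤ N)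
    {A : Fin (m + 2) → Finset (Fin N)} (hA : IsAllocation A)
    (hL : LorenzDominating (contestedVal m N) A) : contestedVal m N 0 (A 0) ≤ 2 := by
  by_contra! h
  have h1 := hL _ (isAllocation_balancedAlloc m N) (m + 1)
  have h2 := sum_take_sortedVec_le (util (contestedVal m N) A) (Finset.univ.erase 0)
  rw [show #(Finset.univ.erase (0 : Fin (m + 2))) = m + 1 by simp] at h2
  have h3 := sum_erase_lt_of_two_lt hA h
  have h4 := le_sum_take_balancedAlloc hN
  omega

/-- Splitting the items by residue gives agent `0` value three in every bundle. -/
lemma two_lt_contestedVal_residue {m N : ℕ} (hN : 3 * (m + 2) ≤ N) (j : Fin (m + 2)) :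
    2 < contestedVal m N 0 {x | x.val % (m + 2) = j.val} := by
  have hj := j.isLt
  have hmod : j.val % (m + 2) = j.val := Nat.mod_eq_of_lt hj
  have h1 : 1 ≤ #{x : Fin N | x.val % (m + 2) = j.val ∧ x.val < m + 2} := by
    rw [Nat.one_le_iff_ne_zero, Finset.card_ne_zero]
    exact ⟨⟨j, by omega⟩, by simp [hmod]⟩
  have h2 : 2 ≤ #{x : Fin N | x.val % (m + 2) = j.val ∧ ¬ x.val < m + 2} := by
    refine Finset.one_lt_card.2 ⟨⟨j + (m + 2), by omega⟩, ?_,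
      ⟨j + (m + 2) + (m + 2), by omega⟩, ?_, ?_⟩ <;> simp [hmod]
  rw [contestedVal_zero, twoBlockRank, Finset.filter_filter, Finset.filter_filter]
  omega

/-- For every `n ≥ 2` there are MRF valuations on a set of `(2n−1)·n` items such that
a Lorenz dominating allocation exists, yet in every Lorenz dominating allocation some
agent's value falls strictly short of her maximin share. -/
theorem lorenz_dominating_not_maximin_fair (n : ℕ) (hn : 2 ≤ n) :
    ∃ f : Fin n → Finset (Fin ((2 * n - 1) * n)) → ℕ,
      (∀ i, IsMRF (f i)) ∧
      (∃ A : Fin n → Finset (Fin ((2 * n - 1) * n)),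
        IsAllocation A ∧ LorenzDominating f A) ∧
      (∀ A : Fin n → Finset (Fin ((2 * n - 1) * n)),
        IsAllocation A → LorenzDominating f A →
        ∃ i : Fin n, ∃ P : Fin n → Finset (Fin ((2 * n - 1) * n)),
          IsPartition P ∧ ∀ j : Fin n, f i (A i) < f i (P j)) := by
  obtain ⟨m, rfl⟩ := Nat.exists_eq_add_of_le' hn
  have hN : 3 * (m + 2) ≤ (2 * (m + 2) - 1) * (m + 2) := Nat.mul_le_mul_right _ (by omega)
  refine ⟨contestedVal m _, fun i => ?_, ⟨balancedAlloc m _, isAllocation_balancedAlloc m _,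
    lorenzDominating_balancedAlloc hN⟩, fun A hA hL => ⟨0,
      fun j => {x | x.val % (m + 2) = j.val}, ⟨fun i j hij => ?_, fun a => ?_⟩, fun j => ?_⟩⟩
  · unfold contestedVal
    split_ifs <;> exact isMRF_twoBlockRank _ _ _
  · rw [Finset.disjoint_left]
    intro x hi hj
    simp only [Finset.mem_filter, Finset.mem_univ, true_and] at hi hj
    exact hij (Fin.ext (hi.symm.trans hj))
  · exact ⟨⟨a.val % (m + 2), Nat.mod_lt _ (by omega)⟩, by simp⟩
  · exact (hL.contestedVal_zero_le hN hA).trans_lt (two_lt_contestedVal_residue hN j)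
end

section
/- Let f_1,…,f_n be MRF (submodular dichotomous) valuations on a finite item set M and let A be a Lorenz dominating allocation. Then every agent receives at least half her maximin share: for every agent i, 2·f_i(A_i) ≥ maximin share of agent i. -/
open Finset
open scoped Classical

variable {n : ℕ} {I : Type*} [DecidableEq I] [Fintype I]

theorem List.sum_map_min_le_sum_take (c : ℕ) (l : List ℕ) (k : ℕ) :
    (l.map (min c)).sum ≤ (l.take k).sum + c * (l.length - k) := by
  induction l generalizing k with
  | nil => simp
  | cons x l ih =>
    cases k with
    | zero =>
      have h := ih 0
      have hx := min_le_left c x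
      simp only [List.map_cons, List.sum_cons, List.take_zero, List.sum_nil, List.length_cons,
        Nat.sub_zero, zero_add, mul_add, mul_one] at h ⊢
      omega
    | succ k =>
      have h := ih k
      have hx := min_le_right c x
      simp only [List.map_cons, List.sum_cons, List.take_succ_cons, List.length_cons,
        Nat.add_sub_add_right]
      omega

theorem List.exists_sum_take_le_sum_map_min (c : ℕ) {l : List ℕ}
    (hl : l.Pairwise (· ≤ ·)) :
    ∃ k, (l.take k).sum + c * (l.length - k) ≤ (l.map (min c)).sum := by
  induction l with
  | nil => exact ⟨0, by simp⟩
  | cons x l ih =>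
    rw [List.pairwise_cons] at hl
    by_cases hx : x ≤ c
    · obtain ⟨k, hk⟩ := ih hl.2
      refine ⟨k + 1, ?_⟩
      simp only [List.map_cons, List.sum_cons, List.take_succ_cons, List.length_cons,
        Nat.add_sub_add_right, min_eq_right hx]
      omega
    · refine ⟨0, ?_⟩
      have h : ((x :: l).map (min c)).sum = (x :: l).length • c := by
        apply List.sum_eq_card_nsmul (l := (x :: l).map (min c)) c ?_ |>.trans (by simp)
        intro y hy
        obtain ⟨z, hz, rfl⟩ := List.mem_map.1 hy
        refine min_eq_left ?_
        rcases List.mem_cons.1 hz with rfl | hz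
        · omega
        · have := hl.1 z hz
          omega
      rw [h]
      simp [mul_comm]

/-- Lorenz domination implies domination of every truncated welfare `∑ i, min c (u i)`. -/
theorem LorenzGE.sum_min_le {n : ℕ} {u v : Fin n → ℕ} (h : LorenzGE u v) (c : ℕ) :
    ∑ i, min c (v i) ≤ ∑ i, min c (u i) := by
  have key : ∀ w : Fin n → ℕ, ∑ i, min c (w i) = ((sortedVec w).map (min c)).sum := by
    intro w
    rw [← Multiset.sum_coe, ← Multiset.map_coe, sortedVec, Multiset.sort_eq, Multiset.map_map]
    rfl
  have hlen : ∀ w : Fin n → ℕ, (sortedVec w).length = n := by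
    intro w
    simp [sortedVec]
  obtain ⟨k, hk⟩ := List.exists_sum_take_le_sum_map_min c
    (l := sortedVec u) (Multiset.pairwise_sort _ _)
  have hv := List.sum_map_min_le_sum_take c (sortedVec v) k
  have huv := h k
  rw [hlen] at hk hv
  rw [key, key]
  omega

namespace IsMRF

variable {I : Type*} [DecidableEq I] {f : Finset I → ℕ}

theorem le_insert (hf : IsMRF f) (S : Finset I) (a : I) : f S ≤ f (insert a S) := by
  rcases hf.dichot S a with h | h <;> omega

theorem le_union (hf : IsMRF f) (S T : Finset I) : f T ≤ f (S ∪ T) := by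
  induction S using Finset.induction_on with
  | empty => simp
  | insert a S _ ih =>
    rw [Finset.insert_union]
    exact ih.trans (hf.le_insert _ _)

theorem mono (hf : IsMRF f) {S T : Finset I} (h : S ⊆ T) : f S ≤ f T := by
  simpa [Finset.union_eq_left.2 h] using hf.le_union T S

/-- The gain from adding `T` to `S` is at most the number of items of `T` that are useful
on their own on top of `S`. -/
theorem union_le_add_card (hf : IsMRF f) (S T : Finset I) :
    f (S ∪ T) ≤ f S + #{a ∈ T | f S < f (insert a S)} := by
  induction T using Finset.induction_on with
  | empty => simp
  | insert a T ha ih =>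
    have hsub := hf.submod S (S ∪ T) Finset.subset_union_left a
    rw [Finset.union_insert, Finset.filter_insert]
    split_ifs with h
    · rw [Finset.card_insert_of_notMem (by simp [ha])]
      rcases hf.dichot S a with h' | h' <;> omega
    · omega

/-- A set of items each of which is irredundant in `T` has size at most `f T`. -/
theorem card_le_of_erase_lt (hf : IsMRF f) {S T : Finset I} (hST : S ⊆ T)
    (h : ∀ a ∈ S, f (T.erase a) < f T) : #S ≤ f T := by
  refine le_trans ?_ (hf.mono hST)
  induction S using Finset.induction_on with
  | empty => simp
  | insert a S ha ih =>
    have haT : a ∈ T := hST (Finset.mem_insert_self a S)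
    have hS : S ⊆ T := (Finset.subset_insert a S).trans hST
    have ih' := ih hS fun b hb => h b (Finset.mem_insert_of_mem hb)
    have hsub := hf.submod S (T.erase a) (Finset.subset_erase.2 ⟨hS, ha⟩) a
    rw [Finset.insert_erase haT] at hsub
    have hlt := h a (Finset.mem_insert_self a S)
    rw [Finset.card_insert_of_notMem ha]
    omega

end IsMRF

/-- In a Lorenz dominating allocation, an item useful to agent `i` is held by some other agent,
who cannot give it up without losing truncated utility. -/
theorem LorenzDominating.exists_erase_lt {n : ℕ} {I : Type*} [DecidableEq I] [Fintype I]
    {f : Fin n → Finset I → ℕ} {A : Fin n → Finset I} (hA : IsAllocation A)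
    (hLD : LorenzDominating f A) {i : Fin n} {a : I}
    (ha : f i (A i) < f i (insert a (A i))) :
    ∃ k ≠ i, a ∈ A k ∧
      min (f i (A i) + 1) (f k ((A k).erase a)) < min (f i (A i) + 1) (f k (A k)) := by
  by_contra! hcon
  let B : Fin n → Finset I := fun k => if k = i then insert a (A i) else (A k).erase a
  have hB : IsAllocation B := by
    intro j k hjk
    have hd := hA j k hjk
    rw [Finset.disjoint_left] at hd ⊢
    intro x hx hx'
    simp only [B] at hx hx'
    by_cases hj : j = i <;> by_cases hk : k = i <;> simp_all
  have hle := (hLD B hB).sum_min_le (f i (A i) + 1)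
  refine hle.not_gt (Finset.sum_lt_sum ?_ ⟨i, Finset.mem_univ i, ?_⟩)
  · intro k _
    by_cases hk : k = i
    · subst hk
      simp only [util, B, if_true]
      omega
    · simp only [util, B, if_neg hk]
      by_cases hak : a ∈ A k
      · exact hcon k hk hak
      · rw [Finset.erase_eq_of_notMem hak]
  · simp only [util, B, if_true]
    omega

/-- In every Lorenz dominating allocation for MRF valuations, every agent receives
at least half her maximin share. -/
theorem lorenz_dominating_half_maximin
    {n : ℕ} {I : Type*} [DecidableEq I] [Fintype I]
    (f : Fin n → Finset I → ℕ) (hf : ∀ i, IsMRF (f i))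
    (A : Fin n → Finset I) (hA : IsAllocation A)
    (hLD : LorenzDominating f A) :
    ∀ i : Fin n, ∀ P : Fin n → Finset I, IsPartition P →
      ∃ j : Fin n, f i (P j) ≤ 2 * f i (A i) := by
  intro i P hP
  by_contra! hcon
  let useful : I → Prop := fun a => f i (A i) < f i (insert a (A i))
  have hlower : n * (f i (A i) + 1) ≤ #{a : I | useful a} := by
    calc n * (f i (A i) + 1) = ∑ _j : Fin n, (f i (A i) + 1) := by simp
      _ ≤ ∑ j, #{a ∈ P j | useful a} := by
          refine Finset.sum_le_sum fun j _ => ?_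
          have h1 := (hf i).union_le_add_card (A i) (P j)
          have h2 := (hf i).le_union (A i) (P j)
          have h3 := hcon j
          simp only [useful]
          omega
      _ = #(Finset.univ.biUnion fun j => {a ∈ P j | useful a}) :=
          (Finset.card_biUnion fun j _ k _ hjk =>
            Finset.disjoint_filter_filter (hP.1 j k hjk)).symm
      _ ≤ #{a : I | useful a} := Finset.card_le_card fun a ha => by
          simp only [Finset.mem_biUnion, Finset.mem_filter] at ha
          obtain ⟨j, _, _, ha⟩ := ha
          simpa using ha
  have hheld : ∀ a, useful a → ∃ k ≠ i, a ∈ A k ∧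
      min (f i (A i) + 1) (f k ((A k).erase a)) < min (f i (A i) + 1) (f k (A k)) :=
    fun a ha => hLD.exists_erase_lt hA ha
  have hupper : #{a : I | useful a} ≤ (n - 1) * (f i (A i) + 1) := by
    calc #{a : I | useful a}
        ≤ #((Finset.univ.erase i).biUnion fun k => {a ∈ A k | useful a}) :=
          Finset.card_le_card fun a ha => by
            have ha' : useful a := by simpa using ha
            obtain ⟨k, hk, hak, _⟩ := hheld a ha'
            simp only [Finset.mem_biUnion, Finset.mem_filter, Finset.mem_erase]
            exact ⟨k, ⟨hk, Finset.mem_univ k⟩, hak, ha'⟩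
      _ ≤ #(Finset.univ.erase i) * (f i (A i) + 1) := by
          refine Finset.card_biUnion_le_card_mul _ _ _ fun k _ => ?_
          have hlt : ∀ a ∈ ({a ∈ A k | useful a} : Finset I),
              min (f i (A i) + 1) (f k ((A k).erase a)) <
                min (f i (A i) + 1) (f k (A k)) := by
            intro a ha
            obtain ⟨hak, hau⟩ := Finset.mem_filter.1 ha
            obtain ⟨l, _, hal, hl⟩ := hheld a hau
            have hlk : l = k := by
              by_contra hne
              exact Finset.disjoint_left.1 (hA l k hne) hal hak
            rwa [hlk] at hl
          have hcard := (hf k).card_le_of_erase_lt (Finset.filter_subset _ (A k))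
            fun a ha => by
              have := hlt a ha
              omega
          rcases Finset.eq_empty_or_nonempty ({a ∈ A k | useful a} : Finset I) with he | ⟨a, ha⟩
          · simp [he]
          · have h1 := hlt a ha
            have h2 := (hf k).dichot ((A k).erase a) a
            rw [Finset.insert_erase (Finset.mem_filter.1 ha).1] at h2
            omega
      _ = (n - 1) * (f i (A i) + 1) := by simp
  have hn : 0 < n := i.pos
  have : (n - 1) * (f i (A i) + 1) < n * (f i (A i) + 1) :=
    Nat.mul_lt_mul_of_pos_right (by omega) (by omega)
  omega
end
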